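/- arXiv:2504.12927 — 3 statements merged into one kernel-verified Lean document; each statement's English description precedes it below -/
import Mathlib

section
/- Linear momentum loss along hyperboloidal evolution (analytic form of Theorem 5.2). Let Q : S² → ℝ be continuous. Let T, S : ℝ³∖{0} → Sym₃(ℝ) (symmetric 3×3 real matrices) be C² maps that are positively homogeneous of degree 0 and satisfy T(x)x = 0, tr T(x) = 0, S(x)x = 0, tr S(x) = 0 for all x ≠ 0. Define vector fields P, G : ℝ³∖{0} → ℝ³ by P_k = Σ_j ∂_j T_{jk} and G_k = Σ_j ∂_j S_{jk}. Let Φ : (0,∞) × S² → ℝ be continuous with Φ(r,ω) = r⁻² [ −4 Q(ω) + 2 (div P)(ω) + (div G)(ω) ] + O(r⁻³) uniformly in ω as r → ∞, where div denotes the Euclidean divergence on ℝ³. Then for every vector e ∈ ℝ³, lim_{r→∞} ∫_{S²} r² Φ(r,ω) ⟨ω, e⟩ dA(ω) = −4 ∫_{S²} Q(ω) ⟨ω, e⟩ dA(ω). -/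
open MeasureTheory Filter Real RealInnerProductSpace Matrix

noncomputable section

/-- Euclidean 3-space. -/
abbrev E3 := EuclideanSpace ℝ (Fin 3)

/-- The unit sphere `S²` in Euclidean `ℝ³`. -/
abbrev S2 := Metric.sphere (0 : E3) 1

/-- The surface (Riemannian area) measure on `S²`, with total area `4π`. -/
noncomputable def sphereMeasure : Measure S2 := Measure.toSphere (volume : Measure E3)

/-- The Euclidean row divergence of a matrix field: `P_k = ∑ j ∂_j T_{jk}`. -/
noncomputable def rowDiv (T : E3 → Matrix (Fin 3) (Fin 3) ℝ) (x : E3) (k : Fin 3) : ℝ :=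
  ∑ j : Fin 3, fderiv ℝ (fun y : E3 => T y j k) x (EuclideanSpace.single j 1)

/-- The Euclidean divergence of the row divergence: `div P = ∑ k ∂_k P_k`. -/
noncomputable def divRowDiv (T : E3 → Matrix (Fin 3) (Fin 3) ℝ) (x : E3) : ℝ :=
  ∑ k : Fin 3, fderiv ℝ (fun y : E3 => rowDiv T y k) x (EuclideanSpace.single k 1)

lemma isOpen_ne0 : IsOpen {x : E3 | x ≠ 0} := isOpen_ne

lemma rowDiv_contDiffOn (T : E3 → Matrix (Fin 3) (Fin 3) ℝ)
    (hT : ∀ j k : Fin 3, ContDiffOn ℝ 2 (fun x : E3 => T x j k) {x : E3 | x ≠ 0}) (k : Fin 3) :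
    ContDiffOn ℝ 1 (fun x => rowDiv T x k) {x : E3 | x ≠ 0} := by
  unfold rowDiv
  refine ContDiffOn.sum fun j _ => ?_
  have h := (hT j k).fderiv_of_isOpen (m := 1) isOpen_ne0 (by norm_num)
  exact h.clm_apply contDiffOn_const

lemma divRowDiv_continuousOn (T : E3 → Matrix (Fin 3) (Fin 3) ℝ)
    (hT : ∀ j k : Fin 3, ContDiffOn ℝ 2 (fun x : E3 => T x j k) {x : E3 | x ≠ 0}) :
    ContinuousOn (divRowDiv T) {x : E3 | x ≠ 0} := by
  unfold divRowDiv
  refine continuousOn_finsetSum _ fun k _ => ?_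
  have h := (rowDiv_contDiffOn T hT k).fderiv_of_isOpen (m := 0) isOpen_ne0 (by norm_num)
  exact h.continuousOn.clm_apply continuousOn_const

lemma rowDiv_hom (T : E3 → Matrix (Fin 3) (Fin 3) ℝ)
    (hT_hom : ∀ c : ℝ, 0 < c → ∀ x : E3, x ≠ 0 → T (c • x) = T x)
    (c : ℝ) (hc : 0 < c) (x : E3) (hx : x ≠ 0) (k : Fin 3) :
    c * rowDiv T (c • x) k = rowDiv T x k := by
  unfold rowDiv
  rw [Finset.mul_sum]
  refine Finset.sum_congr rfl fun j _ => ?_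
  have h1 : (fun y : E3 => T (c • y) j k) =ᶠ[nhds x] (fun y : E3 => T y j k) := by
    filter_upwards [isOpen_ne0.mem_nhds hx] with y hy
    rw [hT_hom c hc y hy]
  have h2 := h1.fderiv_eq (𝕜 := ℝ)
  rw [fderiv_comp_smul (f := fun y : E3 => T y j k)] at h2
  rw [← h2]
  simp

lemma divRowDiv_hom (T : E3 → Matrix (Fin 3) (Fin 3) ℝ)
    (hT_hom : ∀ c : ℝ, 0 < c → ∀ x : E3, x ≠ 0 → T (c • x) = T x)
    (c : ℝ) (hc : 0 < c) (x : E3) (hx : x ≠ 0) :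
    c * (c * divRowDiv T (c • x)) = divRowDiv T x := by
  unfold divRowDiv
  rw [Finset.mul_sum, Finset.mul_sum]
  refine Finset.sum_congr rfl fun k _ => ?_
  have h1 : (fun y : E3 => c • rowDiv T (c • y) k) =ᶠ[nhds x] (fun y : E3 => rowDiv T y k) := by
    filter_upwards [isOpen_ne0.mem_nhds hx] with y hy
    exact rowDiv_hom T hT_hom c hc y hy k
  have h2 := h1.fderiv_eq (𝕜 := ℝ)
  have h3 := congrFun (fderiv_const_smul_field (𝕜 := ℝ) (f := fun y : E3 => rowDiv T (c • y) k) c) x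
  rw [Pi.smul_apply, fderiv_comp_smul (f := fun y : E3 => rowDiv T y k)] at h3
  replace h2 := h3.symm.trans h2
  rw [← h2]
  simp

lemma rowDiv_tang (T : E3 → Matrix (Fin 3) (Fin 3) ℝ)
    (hT : ∀ j k : Fin 3, ContDiffOn ℝ 2 (fun x : E3 => T x j k) {x : E3 | x ≠ 0})
    (hT_tang : ∀ x : E3, x ≠ 0 → (T x) *ᵥ (fun j => x j) = 0)
    (hT_tr : ∀ x : E3, x ≠ 0 → (T x).trace = 0) (x : E3) (hx : x ≠ 0) :
    ∑ k, x k * rowDiv T x k = 0 := by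
  have hd : ∀ j k, DifferentiableAt ℝ (fun y : E3 => T y j k) x := fun j k =>
    ((hT j k).differentiableOn (by norm_num)).differentiableAt (isOpen_ne0.mem_nhds hx)
  have hc : ∀ k, HasFDerivAt (fun y : E3 => y k) (EuclideanSpace.proj k : E3 →L[ℝ] ℝ) x :=
    fun k => (EuclideanSpace.proj k : E3 →L[ℝ] ℝ).hasFDerivAt
  have key : ∀ j, ∑ k, x k * fderiv ℝ (fun y : E3 => T y j k) x (EuclideanSpace.single j 1)
      = - T x j j := by
    intro j
    have h1 : (fun y : E3 => ∑ k, T y j k * y k) =ᶠ[nhds x] (fun y : E3 => (0 : ℝ)) := by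
      filter_upwards [isOpen_ne0.mem_nhds hx] with y hy
      exact congrFun (hT_tang y hy) j
    have h2 : HasFDerivAt (fun y : E3 => ∑ k, T y j k * y k) _ x :=
      HasFDerivAt.fun_sum (u := Finset.univ) fun k _ => ((hd j k).hasFDerivAt.mul (hc k))
    have h3 := h1.fderiv_eq (𝕜 := ℝ)
    rw [h2.fderiv] at h3
    have h4 := congrArg (fun L : E3 →L[ℝ] ℝ => L (EuclideanSpace.single j 1)) h3
    simp [Finset.sum_add_distrib] at h4
    linarith
  have : ∑ k, x k * rowDiv T x k = ∑ j, - T x j j := by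
    simp_rw [← key, rowDiv, Finset.mul_sum]
    exact Finset.sum_comm
  rw [this, Finset.sum_neg_distrib]
  have := hT_tr x hx
  rw [Matrix.trace] at this
  simpa using this

/-- the tangential vector field whose divergence is `⟪x,e⟫ div P` -/
def vf (T : E3 → Matrix (Fin 3) (Fin 3) ℝ) (e : E3) (k : Fin 3) (x : E3) : ℝ :=
  ⟪x, e⟫ * rowDiv T x k - ∑ j, T x k j * e j

lemma vf_contDiffOn (T : E3 → Matrix (Fin 3) (Fin 3) ℝ)
    (hT : ∀ j k : Fin 3, ContDiffOn ℝ 2 (fun x : E3 => T x j k) {x : E3 | x ≠ 0}) (e : E3)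
    (k : Fin 3) : ContDiffOn ℝ 1 (vf T e k) {x : E3 | x ≠ 0} := by
  unfold vf
  refine ContDiffOn.sub (ContDiffOn.mul ?_ (rowDiv_contDiffOn T hT k)) ?_
  · exact (contDiff_id.inner ℝ contDiff_const).contDiffOn
  · exact ContDiffOn.sum fun j _ => ((hT k j).of_le (by norm_num)).mul contDiffOn_const

lemma vf_tang (T : E3 → Matrix (Fin 3) (Fin 3) ℝ)
    (hT : ∀ j k : Fin 3, ContDiffOn ℝ 2 (fun x : E3 => T x j k) {x : E3 | x ≠ 0})
    (hT_symm : ∀ x : E3, x ≠ 0 → (T x).IsSymm)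
    (hT_tang : ∀ x : E3, x ≠ 0 → (T x) *ᵥ (fun j => x j) = 0)
    (hT_tr : ∀ x : E3, x ≠ 0 → (T x).trace = 0) (e x : E3) (hx : x ≠ 0) :
    ∑ k, x k * vf T e k x = 0 := by
  have h1 := rowDiv_tang T hT hT_tang hT_tr x hx
  have h2 : ∀ j, ∑ k, T x k j * x k = 0 := by
    intro j
    have := congrFun (hT_tang x hx) j
    simp only [Matrix.mulVec, dotProduct, Pi.zero_apply] at this
    rw [← this]
    exact Finset.sum_congr rfl fun k _ => by rw [(hT_symm x hx).apply]
  have h3 : ∑ k, x k * vf T e k x = ⟪x, e⟫ * ∑ k, x k * rowDiv T x k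
      - ∑ j, e j * ∑ k, T x k j * x k := by
    simp_rw [vf, mul_sub, Finset.sum_sub_distrib, Finset.mul_sum]
    congr 1
    · exact Finset.sum_congr rfl fun k _ => by ring
    · rw [Finset.sum_comm]
      exact Finset.sum_congr rfl fun k _ => Finset.sum_congr rfl fun j _ => by ring
  rw [h3, h1]
  simp [h2]

lemma vf_div (T : E3 → Matrix (Fin 3) (Fin 3) ℝ)
    (hT : ∀ j k : Fin 3, ContDiffOn ℝ 2 (fun x : E3 => T x j k) {x : E3 | x ≠ 0})
    (e x : E3) (hx : x ≠ 0) :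
    ∑ k, fderiv ℝ (vf T e k) x (EuclideanSpace.single k 1) = ⟪x, e⟫ * divRowDiv T x := by
  have hd : ∀ j k, DifferentiableAt ℝ (fun y : E3 => T y j k) x := fun j k =>
    ((hT j k).differentiableOn (by norm_num)).differentiableAt (isOpen_ne0.mem_nhds hx)
  have hr : ∀ k, DifferentiableAt ℝ (fun y : E3 => rowDiv T y k) x := fun k =>
    ((rowDiv_contDiffOn T hT k).differentiableOn (by norm_num)).differentiableAt
      (isOpen_ne0.mem_nhds hx)
  have hi : HasFDerivAt (fun y : E3 => ⟪y, e⟫) (innerSL ℝ e) x := by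
    have := (innerSL ℝ e).hasFDerivAt (x := x)
    refine this.congr_of_eventuallyEq (Eventually.of_forall fun y => ?_)
    simp [real_inner_comm]
  have hk : ∀ k, fderiv ℝ (vf T e k) x (EuclideanSpace.single k 1)
      = ⟪x, e⟫ * fderiv ℝ (fun y : E3 => rowDiv T y k) x (EuclideanSpace.single k 1)
        + rowDiv T x k * e k
        - ∑ j, e j * fderiv ℝ (fun y : E3 => T y k j) x (EuclideanSpace.single k 1) := by
    intro k
    have h2 : HasFDerivAt (vf T e k) _ x :=
      (hi.mul (hr k).hasFDerivAt).sub
      (HasFDerivAt.fun_sum (u := Finset.univ) fun j _ => ((hd k j).hasFDerivAt.mul_const (e j)))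
    rw [h2.fderiv]
    simp [EuclideanSpace.inner_single_right]
  simp_rw [hk, Finset.sum_sub_distrib, Finset.sum_add_distrib, divRowDiv, Finset.mul_sum]
  rw [add_sub_assoc]
  refine add_eq_left.2 ?_
  rw [sub_eq_zero, Finset.sum_comm]
  refine Finset.sum_congr rfl fun k _ => ?_
  rw [rowDiv, Finset.sum_mul]
  exact Finset.sum_congr rfl fun k _ => by ring

lemma polar (a : ℝ → ℝ) (b : S2 → ℝ) (f : E3 → ℝ)
    (h : ∀ (ω : S2) (r : ℝ), 0 < r → f (r • (ω : E3)) = b ω * a r) :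
    ∫ x, f x = (∫ ω, b ω ∂sphereMeasure) *
      ∫ r : Set.Ioi (0 : ℝ), a r ∂(Measure.volumeIoiPow (Module.finrank ℝ E3 - 1)) := by
  have h1 : ∫ x, f x = ∫ x : ({(0)}ᶜ : Set E3), f x.1 ∂((volume : Measure E3).comap (↑)) := by
    rw [integral_subtype_comap (measurableSet_singleton _).compl f,
        restrict_compl_singleton]
  have : IsFiniteMeasure sphereMeasure := by unfold sphereMeasure; infer_instance
  rw [h1, ← integral_prod_mul b (fun r : Set.Ioi (0 : ℝ) => a r), sphereMeasure,
    ← ((volume : Measure E3).measurePreserving_homeomorphUnitSphereProd).integral_comp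
      (Homeomorph.measurableEmbedding _)]
  refine integral_congr_ae (Eventually.of_forall fun x => ?_)
  have hx : (x : E3) ≠ 0 := x.2
  have hp : 0 < ‖(x : E3)‖ := norm_pos_iff.2 hx
  have := h (homeomorphUnitSphereProd E3 x).1 (homeomorphUnitSphereProd E3 x).2
    (homeomorphUnitSphereProd E3 x).2.2
  simp only [← this]
  congr 1
  simp [smul_smul, hp.ne']

lemma exists_eta : ∃ η : ℝ → ℝ, ContDiff ℝ 1 η ∧ (∀ t, 0 ≤ η t) ∧ (∀ t, t ≤ 1 → η t = 0) ∧
    (∀ t, 3 ≤ t → η t = 0) ∧ η 2 = 1 := by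
  let f : ContDiffBump (2 : ℝ) := ⟨1/2, 1, by norm_num, by norm_num⟩
  refine ⟨f, f.contDiff, f.nonneg', fun t ht => f.zero_of_le_dist ?_,
    fun t ht => f.zero_of_le_dist ?_, f.one_of_mem_closedBall ?_⟩
  · rw [Real.dist_eq, abs_sub_comm]
    exact le_trans (by change (1:ℝ) ≤ 2 - t; linarith) (le_abs_self _)
  · rw [Real.dist_eq]
    exact le_trans (by change (1:ℝ) ≤ t - 2; linarith) (le_abs_self _)
  · simp [f.rIn_pos.le]

lemma integral_fderiv_zero (w : E3 → ℝ) (hw : ContDiff ℝ 1 w) (hc : HasCompactSupport w) (v : E3) :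
    Integrable (fun x => fderiv ℝ w x v) ∧ ∫ x, fderiv ℝ w x v = 0 := by
  have hi : Integrable (fun x => fderiv ℝ w x v) := by
    refine Continuous.integrable_of_hasCompactSupport ?_ ?_
    · exact (hw.continuous_fderiv (by norm_num)).clm_apply continuous_const
    · exact hc.fderiv_apply (𝕜 := ℝ) v
  refine ⟨hi, ?_⟩
  have := integral_mul_fderiv_eq_neg_fderiv_mul_of_integrable (μ := (volume : Measure E3))
    (f := w) (g := fun _ => (1 : ℝ)) (v := v)
    (by simpa using hi) (by simp)
    (by simpa using hw.continuous.integrable_of_hasCompactSupport hc)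
    (fun x _ => hw.differentiable (by norm_num) x) (fun x _ => by fun_prop)
  simpa using this

lemma cutoff_support (η : ℝ → ℝ) (h3 : ∀ t, 3 ≤ t → η t = 0) (g : E3 → ℝ) :
    HasCompactSupport (fun x : E3 => η (‖x‖ ^ 2) * g x) := by
  refine HasCompactSupport.intro (isCompact_closedBall (0 : E3) 2) fun x hx => ?_
  have : 2 < ‖x‖ := by simpa using hx
  rw [h3 _ (by nlinarith), zero_mul]

lemma cutoff_zero (η : ℝ → ℝ) (h1 : ∀ t, t ≤ 1 → η t = 0) (g : E3 → ℝ) :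
    (fun x : E3 => η (‖x‖ ^ 2) * g x) =ᶠ[nhds 0] fun _ => 0 := by
  filter_upwards [Metric.ball_mem_nhds (0 : E3) one_pos] with x hx
  have : ‖x‖ < 1 := by simpa using hx
  rw [h1 _ (by nlinarith [norm_nonneg x]), zero_mul]

lemma sphere_integral_zero (T : E3 → Matrix (Fin 3) (Fin 3) ℝ)
    (hT : ∀ j k : Fin 3, ContDiffOn ℝ 2 (fun x : E3 => T x j k) {x : E3 | x ≠ 0})
    (hT_symm : ∀ x : E3, x ≠ 0 → (T x).IsSymm)
    (hT_hom : ∀ c : ℝ, 0 < c → ∀ x : E3, x ≠ 0 → T (c • x) = T x)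
    (hT_tang : ∀ x : E3, x ≠ 0 → (T x) *ᵥ (fun j => x j) = 0)
    (hT_tr : ∀ x : E3, x ≠ 0 → (T x).trace = 0) (e : E3) :
    ∫ ω : S2, divRowDiv T (ω : E3) * ⟪(ω : E3), e⟫ ∂sphereMeasure = 0 := by
  obtain ⟨η, hη, hη0, h1, h3, h2⟩ := exists_eta
  have hW : ∀ k, ContDiff ℝ 1 (fun x : E3 => η (‖x‖ ^ 2) * vf T e k x) := by
    intro k
    rw [contDiff_iff_contDiffAt]
    intro x
    by_cases hx : x = 0
    · subst hx
      exact contDiffAt_const.congr_of_eventuallyEq (cutoff_zero η h1 _)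
    · exact (hη.comp (contDiff_norm_sq ℝ)).contDiffAt.mul
        ((vf_contDiffOn T hT e k).contDiffAt (isOpen_ne0.mem_nhds hx))
  have hI := fun k => integral_fderiv_zero _ (hW k) (cutoff_support η h3 _)
    (EuclideanSpace.single k 1)
  have hdiv : ∀ x : E3, ∑ k, fderiv ℝ (fun x : E3 => η (‖x‖ ^ 2) * vf T e k x) x
      (EuclideanSpace.single k 1) = η (‖x‖ ^ 2) * (⟪x, e⟫ * divRowDiv T x) := by
    intro x
    by_cases hx : x = 0
    · subst hx
      simp [(cutoff_zero η h1 _).fderiv_eq]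
    · have hk : ∀ k, fderiv ℝ (fun x : E3 => η (‖x‖ ^ 2) * vf T e k x) x
          (EuclideanSpace.single k 1) = 2 * deriv η (‖x‖ ^ 2) * (x k * vf T e k x)
            + η (‖x‖ ^ 2) * fderiv ℝ (vf T e k) x (EuclideanSpace.single k 1) := by
        intro k
        have a1 : HasFDerivAt (fun x : E3 => η (‖x‖ ^ 2)) _ x :=
          ((hη.differentiable (by norm_num)) (‖x‖ ^ 2)).hasDerivAt.comp_hasFDerivAt x
            (hasStrictFDerivAt_norm_sq x).hasFDerivAt
        have a2 := (((vf_contDiffOn T hT e k).differentiableOn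
          (by norm_num)).differentiableAt (isOpen_ne0.mem_nhds hx)).hasFDerivAt
        rw [(a1.fun_mul a2).fderiv]
        simp [EuclideanSpace.inner_single_right]
        ring
      simp_rw [hk, Finset.sum_add_distrib, ← Finset.mul_sum]
      rw [vf_tang T hT hT_symm hT_tang hT_tr e x hx, vf_div T hT e x hx]
      ring
  have hz : ∫ x : E3, η (‖x‖ ^ 2) * (⟪x, e⟫ * divRowDiv T x) = 0 := by
    simp_rw [← hdiv]
    rw [integral_finsetSum _ fun k _ => (hI k).1]
    exact Finset.sum_eq_zero fun k _ => (hI k).2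
  have hp1 := polar (fun r => η (r ^ 2) * r⁻¹) (fun ω => divRowDiv T (ω : E3) * ⟪(ω : E3), e⟫)
    (fun x : E3 => η (‖x‖ ^ 2) * (⟪x, e⟫ * divRowDiv T x)) (by
      intro ω r hr
      have hω : (ω : E3) ≠ 0 := ne_zero_of_mem_unit_sphere ω
      have := divRowDiv_hom T hT_hom r hr ω hω
      simp only [norm_smul, norm_eq_of_mem_sphere, mul_one, Real.norm_eq_abs, sq_abs,
        inner_smul_left, ← this]
      simp
      field_simp)
  have hp2 := polar (fun r => η (r ^ 2) * r⁻¹) (fun _ => 1)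
    (fun x : E3 => η (‖x‖ ^ 2) * ‖x‖⁻¹) (by
      intro ω r hr
      simp [norm_smul, abs_of_pos hr])
  have hpos : 0 < ∫ x : E3, η (‖x‖ ^ 2) * ‖x‖⁻¹ := by
    refine Continuous.integral_pos_of_hasCompactSupport_nonneg_nonzero
      (x := √2 • EuclideanSpace.single 0 1) ?_ (cutoff_support η h3 _) ?_ ?_
    · rw [continuous_iff_continuousAt]
      intro x
      by_cases hx : x = 0
      · subst hx
        exact continuousAt_const.congr (cutoff_zero η h1 _).symm
      · have := hη.continuous
        have : ContinuousAt (fun x : E3 => η (‖x‖ ^ 2)) x := by fun_prop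
        exact this.mul (continuous_norm.continuousAt.inv₀ (norm_ne_zero_iff.2 hx))
    · intro x
      exact mul_nonneg (hη0 _) (inv_nonneg.2 (norm_nonneg _))
    · simp [norm_smul, h2]
  rw [hz] at hp1
  rw [hp2] at hpos
  exact (mul_eq_zero.1 hp1.symm).resolve_right (right_ne_zero_of_mul hpos.ne')

/-- Linear momentum loss along hyperboloidal evolution (analytic form of Theorem 5.2). -/
theorem momentum_loss
    (Q : S2 → ℝ) (hQ : Continuous Q)
    (T S : E3 → Matrix (Fin 3) (Fin 3) ℝ)
    (hT_smooth : ∀ j k : Fin 3, ContDiffOn ℝ 2 (fun x : E3 => T x j k) {x : E3 | x ≠ 0})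
    (hS_smooth : ∀ j k : Fin 3, ContDiffOn ℝ 2 (fun x : E3 => S x j k) {x : E3 | x ≠ 0})
    (hT_symm : ∀ x : E3, x ≠ 0 → (T x).IsSymm)
    (hS_symm : ∀ x : E3, x ≠ 0 → (S x).IsSymm)
    (hT_hom : ∀ c : ℝ, 0 < c → ∀ x : E3, x ≠ 0 → T (c • x) = T x)
    (hS_hom : ∀ c : ℝ, 0 < c → ∀ x : E3, x ≠ 0 → S (c • x) = S x)
    (hT_tang : ∀ x : E3, x ≠ 0 → (T x) *ᵥ (fun j => x j) = 0)
    (hS_tang : ∀ x : E3, x ≠ 0 → (S x) *ᵥ (fun j => x j) = 0)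
    (hT_tr : ∀ x : E3, x ≠ 0 → (T x).trace = 0)
    (hS_tr : ∀ x : E3, x ≠ 0 → (S x).trace = 0)
    (Φ : ℝ → S2 → ℝ)
    (hΦ_cont : ContinuousOn (Function.uncurry Φ) (Set.Ioi (0 : ℝ) ×ˢ Set.univ))
    (hΦ : ∃ C > (0 : ℝ), ∃ R > (0 : ℝ), ∀ r ≥ R, ∀ ω : S2,
      |Φ r ω - r⁻¹ ^ 2 * (-4 * Q ω + 2 * divRowDiv T (ω : E3) + divRowDiv S (ω : E3))|
        ≤ C / r ^ 3)
    (e : E3) :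
    Tendsto (fun r : ℝ => ∫ ω : S2, r ^ 2 * Φ r ω * ⟪(ω : E3), e⟫ ∂sphereMeasure) atTop
      (nhds (-4 * ∫ ω : S2, Q ω * ⟪(ω : E3), e⟫ ∂sphereMeasure)) := by
  have : IsFiniteMeasure sphereMeasure := by unfold sphereMeasure; infer_instance
  obtain ⟨C, hC, R, hR, hb⟩ := hΦ
  have hcT : ∀ T : E3 → Matrix (Fin 3) (Fin 3) ℝ,
      (∀ j k : Fin 3, ContDiffOn ℝ 2 (fun x : E3 => T x j k) {x : E3 | x ≠ 0}) →
      Continuous (fun ω : S2 => divRowDiv T (ω : E3)) := fun T hT =>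
    (divRowDiv_continuousOn T hT).comp_continuous continuous_subtype_val
      fun ω => ne_zero_of_mem_unit_sphere ω
  have c1 := hcT T hT_smooth
  have c2 := hcT S hS_smooth
  have ce : Continuous (fun ω : S2 => ⟪(ω : E3), e⟫) := by fun_prop
  have int : ∀ f : S2 → ℝ, Continuous f → Integrable f sphereMeasure := fun f hf =>
    hf.integrable_of_hasCompactSupport (HasCompactSupport.of_compactSpace f)
  have z1 := sphere_integral_zero T hT_smooth hT_symm hT_hom hT_tang hT_tr e
  have z2 := sphere_integral_zero S hS_smooth hS_symm hS_hom hS_tang hS_tr e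
  set B : S2 → ℝ := fun ω => -4 * Q ω + 2 * divRowDiv T (ω : E3) + divRowDiv S (ω : E3) with hB
  have cB : Continuous B := by fun_prop
  have hlim : -4 * ∫ ω : S2, Q ω * ⟪(ω : E3), e⟫ ∂sphereMeasure
      = ∫ ω : S2, B ω * ⟪(ω : E3), e⟫ ∂sphereMeasure := by
    have : ∀ ω : S2, B ω * ⟪(ω : E3), e⟫ = -4 * (Q ω * ⟪(ω : E3), e⟫)
        + 2 * (divRowDiv T (ω : E3) * ⟪(ω : E3), e⟫) + divRowDiv S (ω : E3) * ⟪(ω : E3), e⟫ := by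
      intro ω
      simp only [hB]
      ring
    simp_rw [this]
    rw [integral_add (int _ (by fun_prop)) (int _ (by fun_prop)),
      integral_add (int _ (by fun_prop)) (int _ (by fun_prop)),
      integral_const_mul, integral_const_mul, z1, z2]
    ring
  rw [hlim, tendsto_iff_dist_tendsto_zero]
  have hz : Tendsto (fun r : ℝ => (C * ‖e‖ * sphereMeasure.real Set.univ) * r⁻¹) atTop (nhds 0) := by
    simpa using tendsto_inv_atTop_zero.const_mul (C * ‖e‖ * sphereMeasure.real Set.univ)
  refine squeeze_zero' (Eventually.of_forall fun r => dist_nonneg) ?_ hz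
  filter_upwards [eventually_ge_atTop R] with r hr
  have hr0 : 0 < r := hR.trans_le hr
  have cΦ : Continuous (Φ r) := by
    have := hΦ_cont.comp_continuous (f := fun ω : S2 => (r, ω)) (by fun_prop)
      (fun ω => ⟨hr0, Set.mem_univ _⟩)
    exact this
  rw [Real.dist_eq, ← integral_sub (int _ (by fun_prop)) (int _ (by fun_prop)), ← Real.norm_eq_abs]
  refine (norm_integral_le_of_norm_le_const (C := C * ‖e‖ * r⁻¹)
    (Eventually.of_forall fun ω => ?_)).trans (le_of_eq (by ring))
  have h1 : r ^ 2 * Φ r ω * ⟪(ω : E3), e⟫ - B ω * ⟪(ω : E3), e⟫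
      = r ^ 2 * (Φ r ω - r⁻¹ ^ 2 * B ω) * ⟪(ω : E3), e⟫ := by
    field_simp
  have h2 : |⟪(ω : E3), e⟫| ≤ ‖e‖ := by
    simpa using abs_real_inner_le_norm (ω : E3) e
  rw [h1, Real.norm_eq_abs, abs_mul, abs_mul, abs_of_pos (pow_pos hr0 2)]
  calc r ^ 2 * |Φ r ω - r⁻¹ ^ 2 * B ω| * |⟪(ω : E3), e⟫|
      ≤ r ^ 2 * (C / r ^ 3) * ‖e‖ := by
        gcongr
        exact hb r hr ω
    _ = C * ‖e‖ * r⁻¹ := by field_simp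
end
end

section
/- Energy of generalized asymptotically hyperboloidal data is independent of the generalized background (coordinate form of Theorem 6.4, energy part). Let H : (0,∞) → ℝ be continuous with 0 < H(r) < 1 for all r > 0 and H(r) = 1 − 1/(2r²) + O(r⁻³) as r → ∞. Let A, U, W : S² → ℝ be continuous and let a, u, w : (0,∞) × S² → ℝ be continuous with, uniformly in ω ∈ S², a(r,ω) = A(ω) r⁻⁵ + O(r⁻⁶), u(r,ω) = U(ω) r⁻¹ + O(r⁻³), w(r,ω) = W(ω) r⁻¹ + O(r⁻³). Then lim_{r→∞} ∫_{S²} r² [ 2 a(r,ω) / ( r (1−H(r)²)² ) + ( (2 − H(r)²) / ( r³ (1−H(r)²) ) + 2 H(r) / ( r² √(1−H(r)²) ) ) u(r,ω) + ( 2 H(r) / ( r² √(1−H(r)²) ) ) w(r,ω) ] dA(ω) = ∫_{S²} ( 2A(ω) + 3U(ω) + 2W(ω) ) dA(ω). In particular the limit is the same for every such H, i.e. independent of the choice of representative in the class 𝓗 of generalized hyperboloidal backgrounds. -/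
open MeasureTheory Filter Real

noncomputable section

/-- Scaled convergence from a quantitative pointwise expansion. -/
lemma scaled_tendsto (f : ℝ → S2 → ℝ) (F : S2 → ℝ) (k m : ℕ) (hkm : k < m)
    (h : ∃ C > (0 : ℝ), ∃ R > (0 : ℝ), ∀ r ≥ R, ∀ ω : S2,
      |f r ω - F ω / r ^ k| ≤ C / r ^ m) :
    ∃ C > (0 : ℝ), ∀ᶠ r : ℝ in atTop, ∀ ω : S2, |r ^ k * f r ω - F ω| ≤ C / r := by
  obtain ⟨C, hC, R, hR, h⟩ := h
  refine ⟨C, hC, ?_⟩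
  filter_upwards [eventually_ge_atTop R, eventually_ge_atTop 1] with r hr h1 ω
  have hr0 : 0 < r := by linarith
  have hk : 0 < r ^ k := by positivity
  have e : r ^ k * f r ω - F ω = r ^ k * (f r ω - F ω / r ^ k) := by
    field_simp
  rw [e, abs_mul, abs_of_pos hk]
  calc r ^ k * |f r ω - F ω / r ^ k| ≤ r ^ k * (C / r ^ m) := by
        gcongr
        exact h r hr ω
    _ ≤ r ^ k * (C / r ^ (k + 1)) := by
        gcongr
        exact hkm
    _ = C / r := by
        rw [pow_succ]
        field_simp

lemma scaled_pointwise (f : ℝ → S2 → ℝ) (F : S2 → ℝ) (k : ℕ)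
    (h : ∃ C > (0 : ℝ), ∀ᶠ r : ℝ in atTop, ∀ ω : S2, |r ^ k * f r ω - F ω| ≤ C / r) :
    (∀ ω, Tendsto (fun r : ℝ => r ^ k * f r ω) atTop (nhds (F ω))) ∧
    ∀ᶠ r : ℝ in atTop, ∀ ω : S2, |r ^ k * f r ω| ≤ |F ω| + 1 := by
  obtain ⟨C, hC, h⟩ := h
  have hl : Tendsto (fun r : ℝ => C / r) atTop (nhds 0) := tendsto_const_nhds.div_atTop tendsto_id
  constructor
  · intro ω
    rw [tendsto_iff_norm_sub_tendsto_zero]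
    refine squeeze_zero' (Eventually.of_forall fun _ => norm_nonneg _) ?_ hl
    filter_upwards [h] with r hr
    exact hr ω
  · filter_upwards [h, hl.eventually (gt_mem_nhds zero_lt_one)] with r hr h1 ω
    have := abs_sub_abs_le_abs_sub (r ^ k * f r ω) (F ω)
    linarith [hr ω]

/-- Energy of generalized asymptotically hyperboloidal data is independent of the
generalized background (coordinate form of Theorem 6.4, energy part). -/
theorem generalized_energy_charge_limit
    (H : ℝ → ℝ) (hH_cont : ContinuousOn H (Set.Ioi (0 : ℝ)))
    (hH_bound : ∀ r > (0 : ℝ), 0 < H r ∧ H r < 1)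
    (hH_asymp : ∃ C > (0 : ℝ), ∃ R > (0 : ℝ), ∀ r ≥ R,
      |H r - (1 - 1 / (2 * r ^ 2))| ≤ C / r ^ 3)
    (A U W : S2 → ℝ) (hA : Continuous A) (hU : Continuous U) (hW : Continuous W)
    (a u w : ℝ → S2 → ℝ)
    (ha_cont : ContinuousOn (Function.uncurry a) (Set.Ioi (0 : ℝ) ×ˢ Set.univ))
    (hu_cont : ContinuousOn (Function.uncurry u) (Set.Ioi (0 : ℝ) ×ˢ Set.univ))
    (hw_cont : ContinuousOn (Function.uncurry w) (Set.Ioi (0 : ℝ) ×ˢ Set.univ))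
    (ha : ∃ C > (0 : ℝ), ∃ R > (0 : ℝ), ∀ r ≥ R, ∀ ω : S2,
      |a r ω - A ω / r ^ 5| ≤ C / r ^ 6)
    (hu : ∃ C > (0 : ℝ), ∃ R > (0 : ℝ), ∀ r ≥ R, ∀ ω : S2,
      |u r ω - U ω / r| ≤ C / r ^ 3)
    (hw : ∃ C > (0 : ℝ), ∃ R > (0 : ℝ), ∀ r ≥ R, ∀ ω : S2,
      |w r ω - W ω / r| ≤ C / r ^ 3) :
    Tendsto
      (fun r : ℝ => ∫ ω : S2,
        r ^ 2 * (2 * a r ω / (r * (1 - H r ^ 2) ^ 2)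
          + ((2 - H r ^ 2) / (r ^ 3 * (1 - H r ^ 2))
              + 2 * H r / (r ^ 2 * Real.sqrt (1 - H r ^ 2))) * u r ω
          + (2 * H r / (r ^ 2 * Real.sqrt (1 - H r ^ 2))) * w r ω) ∂sphereMeasure)
      atTop
      (nhds (∫ ω : S2, (2 * A ω + 3 * U ω + 2 * W ω) ∂sphereMeasure)) := by
  obtain ⟨CH, hCH, RH, hRH, hH⟩ := hH_asymp
  have hinv : Tendsto (fun r : ℝ => 1 / r) atTop (nhds 0) :=
    tendsto_const_nhds.div_atTop tendsto_id
  -- `r² (1 - H) → 1/2`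
  have hq : Tendsto (fun r : ℝ => r ^ 2 * (1 - H r)) atTop (nhds (1 / 2)) := by
    rw [tendsto_iff_norm_sub_tendsto_zero]
    have hl : Tendsto (fun r : ℝ => CH / r) atTop (nhds 0) :=
      tendsto_const_nhds.div_atTop tendsto_id
    refine squeeze_zero' (Eventually.of_forall fun _ => norm_nonneg _) ?_ hl
    filter_upwards [eventually_ge_atTop RH] with r hr
    have hr0 : 0 < r := by linarith
    have e : r ^ 2 * (1 - H r) - 1 / 2 = -(r ^ 2 * (H r - (1 - 1 / (2 * r ^ 2)))) := by
      field_simp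
      ring
    rw [e, norm_neg, norm_mul, Real.norm_eq_abs, Real.norm_eq_abs, abs_of_pos (by positivity)]
    calc r ^ 2 * |H r - (1 - 1 / (2 * r ^ 2))| ≤ r ^ 2 * (CH / r ^ 3) := by
          gcongr
          exact hH r hr
      _ = CH / r := by field_simp
  have hH1 : Tendsto H atTop (nhds 1) := by
    have h := (tendsto_const_nhds (x := (1 : ℝ))).sub (hq.mul (hinv.pow 2))
    have h2 : (1 : ℝ) - 1 / 2 * 0 ^ 2 = 1 := by norm_num
    rw [h2] at h
    refine h.congr' ?_
    filter_upwards [eventually_gt_atTop 0] with r hr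
    field_simp
    ring
  have hp : Tendsto (fun r : ℝ => r ^ 2 * (1 - H r ^ 2)) atTop (nhds 1) := by
    have h := hq.mul (hH1.const_add 1)
    have h2 : (1 / 2 : ℝ) * (1 + 1) = 1 := by norm_num
    rw [h2] at h
    refine h.congr fun r => ?_
    ring
  have hc1 : Tendsto (fun r : ℝ => 2 / (r ^ 2 * (1 - H r ^ 2)) ^ 2) atTop (nhds 2) := by
    have h := (tendsto_const_nhds (x := (2 : ℝ))).div (hp.pow 2) (by norm_num)
    norm_num at h
    exact h
  have hc3 : Tendsto (fun r : ℝ => 2 * H r / √(r ^ 2 * (1 - H r ^ 2))) atTop (nhds 2) := by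
    have h := (hH1.const_mul 2).div hp.sqrt (by norm_num)
    norm_num at h
    exact h
  have hc2 : Tendsto (fun r : ℝ => (2 - H r ^ 2) / (r ^ 2 * (1 - H r ^ 2))
      + 2 * H r / √(r ^ 2 * (1 - H r ^ 2))) atTop (nhds 3) := by
    have h := (((hH1.pow 2).const_sub 2).div hp (by norm_num)).add hc3
    have h2 : ((2 : ℝ) - 1 ^ 2) / 1 + 2 = 3 := by norm_num
    rw [h2] at h
    exact h
  obtain ⟨ta, ba⟩ := scaled_pointwise a A 5 (scaled_tendsto a A 5 6 (by norm_num) ha)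
  obtain ⟨tu, bu⟩ := scaled_pointwise u U 1
    (scaled_tendsto u U 1 3 (by norm_num) (by simpa using hu))
  obtain ⟨tw, bw⟩ := scaled_pointwise w W 1
    (scaled_tendsto w W 1 3 (by norm_num) (by simpa using hw))
  have : IsFiniteMeasure sphereMeasure := by
    unfold sphereMeasure
    infer_instance
  have key : Tendsto
      (fun r : ℝ => ∫ ω : S2, (2 / (r ^ 2 * (1 - H r ^ 2)) ^ 2 * (r ^ 5 * a r ω)
          + ((2 - H r ^ 2) / (r ^ 2 * (1 - H r ^ 2))
              + 2 * H r / √(r ^ 2 * (1 - H r ^ 2))) * (r ^ 1 * u r ω)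
          + (2 * H r / √(r ^ 2 * (1 - H r ^ 2))) * (r ^ 1 * w r ω)) ∂sphereMeasure)
      atTop
      (nhds (∫ ω : S2, (2 * A ω + 3 * U ω + 2 * W ω) ∂sphereMeasure)) := by
    refine tendsto_integral_filter_of_dominated_convergence
      (fun ω => 3 * (|A ω| + 1) + 4 * (|U ω| + 1) + 3 * (|W ω| + 1)) ?_ ?_ ?_ ?_
    · filter_upwards [eventually_gt_atTop 0] with r hr
      have sl : ∀ f : ℝ → S2 → ℝ,
          ContinuousOn (Function.uncurry f) (Set.Ioi (0 : ℝ) ×ˢ Set.univ) →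
          Continuous (f r) := by
        intro f hf
        exact hf.comp_continuous (f := fun ω : S2 => (r, ω)) (by fun_prop)
          (fun ω => ⟨hr, Set.mem_univ _⟩)
      have h1 := sl a ha_cont
      have h2 := sl u hu_cont
      have h3 := sl w hw_cont
      refine Continuous.aestronglyMeasurable ?_
      exact ((continuous_const.mul (continuous_const.mul h1)).add
        (continuous_const.mul (continuous_const.mul h2))).add
        (continuous_const.mul (continuous_const.mul h3))
    · filter_upwards [ba, bu, bw,
        hc1.abs.eventually_lt_const (show |(2 : ℝ)| < 3 by norm_num),
        hc2.abs.eventually_lt_const (show |(3 : ℝ)| < 4 by norm_num),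
        hc3.abs.eventually_lt_const (show |(2 : ℝ)| < 3 by norm_num)] with r h1 h2 h3 k1 k2 k3
      refine Eventually.of_forall fun ω => ?_
      refine (norm_add₃_le).trans ?_
      simp only [Real.norm_eq_abs]
      rw [abs_mul _ (r ^ 5 * a r ω), abs_mul _ (r ^ 1 * u r ω), abs_mul _ (r ^ 1 * w r ω)]
      exact add_le_add (add_le_add
        (mul_le_mul k1.le (h1 ω) (abs_nonneg _) (by norm_num))
        (mul_le_mul k2.le (h2 ω) (abs_nonneg _) (by norm_num)))
        (mul_le_mul k3.le (h3 ω) (abs_nonneg _) (by norm_num))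
    · have hc : Continuous (fun ω => 3 * (|A ω| + 1) + 4 * (|U ω| + 1) + 3 * (|W ω| + 1)) := by
        fun_prop
      exact hc.integrable_of_hasCompactSupport (HasCompactSupport.of_compactSpace _)
    · refine Eventually.of_forall fun ω => ?_
      exact ((hc1.mul (ta ω)).add (hc2.mul (tu ω))).add (hc3.mul (tw ω))
  refine key.congr' ?_
  filter_upwards [eventually_gt_atTop 0] with r hr
  refine integral_congr_ae (Eventually.of_forall fun ω => ?_)
  obtain ⟨hp0, hp1⟩ := hH_bound r hr
  have hd : 0 < 1 - H r ^ 2 := by nlinarith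
  have hs : 0 < √(1 - H r ^ 2) := Real.sqrt_pos.mpr hd
  have hsr : √(r ^ 2 * (1 - H r ^ 2)) = r * √(1 - H r ^ 2) := by
    rw [Real.sqrt_mul (by positivity), Real.sqrt_sq hr.le]
  simp only [hsr]
  generalize √(1 - H r ^ 2) = s at *
  generalize hD : 1 - H r ^ 2 = D at *
  field_simp
end
end

section
/- Linear momentum of generalized asymptotically hyperboloidal data is independent of the generalized background (coordinate form of Theorem 6.4, momentum part). Let H : (0,∞) → ℝ be continuous with 0 < H(r) < 1 for all r > 0 and H(r) = 1 − 1/(2r²) + O(r⁻³) as r → ∞. Let A, U, W : S² → ℝ be continuous and let a, u, w : (0,∞) × S² → ℝ be continuous with, uniformly in ω ∈ S², a(r,ω) = A(ω) r⁻⁵ + O(r⁻⁶), u(r,ω) = U(ω) r⁻¹ + O(r⁻³), w(r,ω) = W(ω) r⁻¹ + O(r⁻³). Then for every vector e ∈ ℝ³, lim_{r→∞} ∫_{S²} r² [ 2 a(r,ω) / ( r (1−H(r)²)² ) + ( (2 − H(r)²) / ( r³ (1−H(r)²) ) + 2 H(r) / ( r² √(1−H(r)²) ) ) u(r,ω) +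 ( 2 H(r) / ( r² √(1−H(r)²) ) ) w(r,ω) ] ⟨ω, e⟩ dA(ω) = ∫_{S²} ( 2A(ω) + 3U(ω) + 2W(ω) ) ⟨ω, e⟩ dA(ω). -/
open MeasureTheory Filter Real RealInnerProductSpace

noncomputable section

instance sphereMeasure_finite : IsFiniteMeasure sphereMeasure := by
  unfold sphereMeasure; infer_instance

theorem cont_integrable (f : S2 → ℝ) (hf : Continuous f) : Integrable f sphereMeasure := by
  have : CompactSpace S2 := isCompact_iff_compactSpace.mp (isCompact_sphere (0 : E3) 1)
  exact hf.integrable_of_hasCompactSupport (HasCompactSupport.of_compactSpace f)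

theorem prod_integrable (f g : S2 → ℝ) (hf : Continuous f) (hg : Continuous g) :
    Integrable (fun ω => f ω * g ω) sphereMeasure :=
  cont_integrable _ (hf.mul hg)

theorem lin_comb (x y z : ℝ) (f₁ f₂ f₃ g : S2 → ℝ) (h₁ : Continuous f₁) (h₂ : Continuous f₂)
    (h₃ : Continuous f₃) (hg : Continuous g) :
    x * (∫ ω, f₁ ω * g ω ∂sphereMeasure) + y * (∫ ω, f₂ ω * g ω ∂sphereMeasure)
      + z * (∫ ω, f₃ ω * g ω ∂sphereMeasure)
      = ∫ ω, (x * f₁ ω + y * f₂ ω + z * f₃ ω) * g ω ∂sphereMeasure := by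
  have i₁ := (prod_integrable f₁ g h₁ hg).const_mul x
  have i₂ := (prod_integrable f₂ g h₂ hg).const_mul y
  have i₃ := (prod_integrable f₃ g h₃ hg).const_mul z
  have i₁₂ : Integrable (fun ω => x * (f₁ ω * g ω) + y * (f₂ ω * g ω)) sphereMeasure := i₁.add i₂
  rw [← integral_const_mul, ← integral_const_mul, ← integral_const_mul,
    ← integral_add i₁ i₂, ← integral_add i₁₂ i₃]
  congr 1; ext ω; ring

theorem slice_cont (f : ℝ → S2 → ℝ)
    (hf : ContinuousOn (Function.uncurry f) (Set.Ioi (0 : ℝ) ×ˢ Set.univ))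
    (r : ℝ) (hr : 0 < r) : Continuous (f r) := by
  have h : ContinuousOn (fun ω : S2 => Function.uncurry f (r, ω)) Set.univ :=
    hf.comp (by fun_prop) (fun ω _ => ⟨hr, trivial⟩)
  exact continuousOn_univ.mp h

theorem tendsto_aux (f : ℝ → S2 → ℝ) (F g : S2 → ℝ) (hF : Continuous F) (hg : Continuous g)
    (hf : ∀ r > 0, Continuous (f r)) (C R : ℝ)
    (h : ∀ r ≥ R, 1 ≤ r → ∀ ω, |f r ω - F ω| ≤ C / r) :
    Tendsto (fun r => ∫ ω, f r ω * g ω ∂sphereMeasure) atTop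
      (nhds (∫ ω, F ω * g ω ∂sphereMeasure)) := by
  have hgi := (cont_integrable _ hg).norm
  rw [tendsto_iff_norm_sub_tendsto_zero]
  have hlim : Tendsto (fun r : ℝ => C / r * ∫ ω, ‖g ω‖ ∂sphereMeasure) atTop (nhds 0) := by
    simpa using (tendsto_const_nhds.div_atTop tendsto_id).mul_const
      (∫ ω, ‖g ω‖ ∂sphereMeasure)
  refine squeeze_zero' (Eventually.of_forall fun _ => norm_nonneg _) ?_ hlim
  filter_upwards [eventually_ge_atTop R, eventually_ge_atTop 1] with r hr h1
  have hc := hf r (by linarith)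
  rw [← integral_sub (prod_integrable _ _ hc hg) (prod_integrable _ _ hF hg),
    ← integral_const_mul]
  refine norm_integral_le_of_norm_le (hgi.const_mul _) (Eventually.of_forall fun ω => ?_)
  rw [← sub_mul, norm_mul]
  exact mul_le_mul_of_nonneg_right (h r hr h1 ω) (norm_nonneg _)

/-- Linear momentum of generalized asymptotically hyperboloidal data is independent of the
generalized background (coordinate form of Theorem 6.4, momentum part). -/
theorem generalized_momentum_charge_limit
    (H : ℝ → ℝ) (hH_cont : ContinuousOn H (Set.Ioi (0 : ℝ)))
    (hH_bound : ∀ r > (0 : ℝ), 0 < H r ∧ H r < 1)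
    (hH_asymp : ∃ C > (0 : ℝ), ∃ R > (0 : ℝ), ∀ r ≥ R,
      |H r - (1 - 1 / (2 * r ^ 2))| ≤ C / r ^ 3)
    (A U W : S2 → ℝ) (hA : Continuous A) (hU : Continuous U) (hW : Continuous W)
    (a u w : ℝ → S2 → ℝ)
    (ha_cont : ContinuousOn (Function.uncurry a) (Set.Ioi (0 : ℝ) ×ˢ Set.univ))
    (hu_cont : ContinuousOn (Function.uncurry u) (Set.Ioi (0 : ℝ) ×ˢ Set.univ))
    (hw_cont : ContinuousOn (Function.uncurry w) (Set.Ioi (0 : ℝ) ×ˢ Set.univ))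
    (ha : ∃ C > (0 : ℝ), ∃ R > (0 : ℝ), ∀ r ≥ R, ∀ ω : S2,
      |a r ω - A ω / r ^ 5| ≤ C / r ^ 6)
    (hu : ∃ C > (0 : ℝ), ∃ R > (0 : ℝ), ∀ r ≥ R, ∀ ω : S2,
      |u r ω - U ω / r| ≤ C / r ^ 3)
    (hw : ∃ C > (0 : ℝ), ∃ R > (0 : ℝ), ∀ r ≥ R, ∀ ω : S2,
      |w r ω - W ω / r| ≤ C / r ^ 3)
    (e : E3) :
    Tendsto
      (fun r : ℝ => ∫ ω : S2,
        r ^ 2 * (2 * a r ω / (r * (1 - H r ^ 2) ^ 2)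
          + ((2 - H r ^ 2) / (r ^ 3 * (1 - H r ^ 2))
              + 2 * H r / (r ^ 2 * Real.sqrt (1 - H r ^ 2))) * u r ω
          + (2 * H r / (r ^ 2 * Real.sqrt (1 - H r ^ 2))) * w r ω)
          * ⟪(ω : E3), e⟫ ∂sphereMeasure)
      atTop
      (nhds (∫ ω : S2, (2 * A ω + 3 * U ω + 2 * W ω) * ⟪(ω : E3), e⟫ ∂sphereMeasure)) := by
  obtain ⟨CH, hCH, RH, -, hH⟩ := hH_asymp
  obtain ⟨Ca, hCa, Ra, -, ha⟩ := ha
  obtain ⟨Cu, hCu, Ru, -, hu⟩ := hu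
  obtain ⟨Cw, hCw, Rw, -, hw⟩ := hw
  have hg : Continuous (fun ω : S2 => ⟪(ω : E3), e⟫) := by fun_prop
  have key1 : ∀ (v : ℝ → S2 → ℝ) (V : S2 → ℝ) (C R : ℝ), 0 < C →
      (∀ r ≥ R, ∀ ω : S2, |v r ω - V ω / r| ≤ C / r ^ 3) →
      ∀ r ≥ R, 1 ≤ r → ∀ ω, |r * v r ω - V ω| ≤ C / r := by
    intro v V C R hC h r hr h1 ω
    have h0 : 0 < r := by linarith
    have e1 : r * v r ω - V ω = r * (v r ω - V ω / r) := by field_simp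
    rw [e1, abs_mul, abs_of_pos h0]
    calc r * |v r ω - V ω / r| ≤ r * (C / r ^ 3) :=
          mul_le_mul_of_nonneg_left (h r hr ω) h0.le
      _ = C / r * (1 / r) := by field_simp
      _ ≤ C / r * 1 := by
          apply mul_le_mul_of_nonneg_left _ (by positivity)
          rw [div_le_one h0]; exact h1
      _ = C / r := mul_one _
  have Ta := tendsto_aux (fun r ω => r ^ 5 * a r ω) A _ hA hg
    (fun r hr => continuous_const.mul (slice_cont a ha_cont r hr)) Ca Ra (by
      intro r hr h1 ω
      have h0 : 0 < r := by linarith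
      have e1 : r ^ 5 * a r ω - A ω = r ^ 5 * (a r ω - A ω / r ^ 5) := by field_simp
      rw [e1, abs_mul, abs_of_pos (by positivity : 0 < r ^ 5)]
      calc r ^ 5 * |a r ω - A ω / r ^ 5| ≤ r ^ 5 * (Ca / r ^ 6) :=
            mul_le_mul_of_nonneg_left (ha r hr ω) (by positivity)
        _ = Ca / r := by field_simp)
  have Tu := tendsto_aux (fun r ω => r * u r ω) U _ hU hg
    (fun r hr => continuous_const.mul (slice_cont u hu_cont r hr)) Cu Ru
    (key1 u U Cu Ru hCu hu)
  have Tw := tendsto_aux (fun r ω => r * w r ω) W _ hW hg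
    (fun r hr => continuous_const.mul (slice_cont w hw_cont r hr)) Cw Rw
    (key1 w W Cw Rw hCw hw)
  have Tp : Tendsto (fun r => r ^ 2 * (1 - H r)) atTop (nhds (1 / 2)) := by
    rw [tendsto_iff_norm_sub_tendsto_zero]
    refine squeeze_zero' (Eventually.of_forall fun _ => norm_nonneg _) ?_
      (tendsto_const_nhds.div_atTop tendsto_id : Tendsto (fun r : ℝ => CH / r) atTop (nhds 0))
    filter_upwards [eventually_ge_atTop RH, eventually_gt_atTop 0] with r hr h0
    have e1 : r ^ 2 * (1 - H r) - 1 / 2 = -(r ^ 2 * (H r - (1 - 1 / (2 * r ^ 2)))) := by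
      field_simp; ring
    rw [e1, norm_neg, norm_mul, Real.norm_eq_abs, Real.norm_eq_abs,
      abs_of_pos (by positivity : 0 < r ^ 2)]
    calc r ^ 2 * |H r - (1 - 1 / (2 * r ^ 2))| ≤ r ^ 2 * (CH / r ^ 3) :=
          mul_le_mul_of_nonneg_left (hH r hr) (by positivity)
      _ = CH / r := by field_simp
  have TH : Tendsto H atTop (nhds 1) := by
    have h1 : Tendsto (fun r : ℝ => 1 - r ^ 2 * (1 - H r) / r ^ 2) atTop (nhds (1 - 0)) :=
      tendsto_const_nhds.sub (Tp.div_atTop (tendsto_pow_atTop two_ne_zero))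
    rw [sub_zero] at h1
    refine h1.congr' ?_
    filter_upwards [eventually_gt_atTop 0] with r h0
    field_simp; ring
  have Tq : Tendsto (fun r => r ^ 2 * (1 - H r ^ 2)) atTop (nhds 1) := by
    have h1 := Tp.mul (TH.const_add 1)
    norm_num at h1
    refine h1.congr fun r => by ring
  have Ts : Tendsto (fun r => √(r ^ 2 * (1 - H r ^ 2))) atTop (nhds 1) := by
    simpa using Tq.sqrt
  have T1 : Tendsto (fun r => 2 / (r ^ 2 * (1 - H r ^ 2)) ^ 2) atTop (nhds 2) := by
    have h1 := (tendsto_const_nhds (x := (2 : ℝ))).div (Tq.pow 2) (by norm_num)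
    norm_num at h1
    exact h1
  have T3 : Tendsto (fun r => 2 * H r / √(r ^ 2 * (1 - H r ^ 2))) atTop (nhds 2) := by
    have h1 := (TH.const_mul 2).div Ts (by norm_num)
    norm_num at h1
    exact h1
  have T2 : Tendsto (fun r => (2 - H r ^ 2) / (r ^ 2 * (1 - H r ^ 2))
      + 2 * H r / √(r ^ 2 * (1 - H r ^ 2))) atTop (nhds 3) := by
    have h1 := (((TH.pow 2).const_sub 2).div Tq (by norm_num)).add T3
    norm_num at h1
    exact h1
  have T := ((T1.mul Ta).add (T2.mul Tu)).add (T3.mul Tw)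
  rw [lin_comb 2 3 2 A U W _ hA hU hW hg] at T
  refine T.congr' ?_
  filter_upwards [eventually_gt_atTop 0] with r h0
  have ca := slice_cont a ha_cont r h0
  have cu := slice_cont u hu_cont r h0
  have cw := slice_cont w hw_cont r h0
  rw [lin_comb _ _ _ (fun ω => r ^ 5 * a r ω) (fun ω => r * u r ω) (fun ω => r * w r ω) _
    (ca.const_mul (r ^ 5)) (cu.const_mul r) (cw.const_mul r) hg]
  congr 1; ext ω
  obtain ⟨hp, hl⟩ := hH_bound r h0
  have hd : 0 < 1 - H r ^ 2 := by nlinarith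
  have hs : √(r ^ 2 * (1 - H r ^ 2)) = r * √(1 - H r ^ 2) := by
    rw [Real.sqrt_mul (by positivity), Real.sqrt_sq h0.le]
  rw [hs]
  have hsd : 0 < √(1 - H r ^ 2) := Real.sqrt_pos.mpr hd
  generalize √(1 - H r ^ 2) = s at *
  have hdd : 2 - H r ^ 2 = 1 + (1 - H r ^ 2) := by ring
  rw [hdd]
  generalize 1 - H r ^ 2 = d at *
  have := hd.ne'
  have := hsd.ne'
  have := h0.ne'
  field_simp
end
end
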